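/- Let U ⊆ ℂ be open and let f : U → ℂ be continuous. If f is complex differentiable at every point of U ∖ f⁻¹({0}), then f is analytic on all of U. -/

import Mathlib

/-!
Let `Ω` be the part of a disc `ball c R` on which `f ≠ 0`, the centre being chosen with `f c ≠ 0`.
Applying the maximum principle on `Ω` to `exp (n * g) • f` and letting `n → ∞` shows that `Re g`
is bounded on `Ω` by its bound on the circle alone: the inner boundary of `Ω`, where `f` vanishes,
does not matter. As real parts of polynomials are dense in the real continuous functions on the
circle, every such `g` has the mean value property at `c`. Three choices of `g` now suffice. The
mean value property for `(z - c) • g z` is Cauchy's theorem `∮ g = 0`. Cauchy's theorem would fail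
for `1 / (z - a)` with `a` in the disc but outside `closure Ω`, so `Ω` is dense in the disc.
Cauchy's theorem for the difference quotients of `f` is Cauchy's formula on `Ω`, and by density on
the whole disc.
-/

open Set Filter Metric Polynomial
open scoped ComplexConjugate NNReal Topology Real

section MaximumPrinciple

theorem le_of_forall_mul_pow_le_mul_pow {a M x y : ℝ} (ha : 0 < a) (hy : 0 < y)
    (h : ∀ n : ℕ, a * x ^ n ≤ M * y ^ n) : x ≤ y := by
  by_contra! hyx
  have hx : 0 < x := hy.trans hyx
  have hlim : Tendsto (fun n : ℕ ↦ M * (y / x) ^ n) atTop (𝓝 0) := by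
    simpa using (tendsto_pow_atTop_nhds_zero_of_lt_one (by positivity)
      ((div_lt_one hx).2 hyx)).const_mul M
  refine ha.not_ge (ge_of_tendsto' hlim fun n ↦ ?_)
  rw [div_pow, ← mul_div_assoc, le_div_iff₀ (by positivity)]
  exact h n

variable {V : Type*} [NormedAddCommGroup V] [NormedSpace ℂ V]

/-- `S` is a boundary of `Ω` in the sense of function algebras: holomorphic functions on `Ω` that
are continuous up to `closure Ω` satisfy the maximum principle with respect to `S`. The condition is
imposed on real parts; multiplying `g` by a unimodular constant gives it for moduli. -/
def IsReMaxBoundary (S Ω : Set V) : Prop :=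
  ∀ ⦃g : V → ℂ⦄ ⦃b : ℝ⦄, DiffContOnCl ℂ g Ω → (∀ w ∈ S, (g w).re ≤ b) → ∀ z ∈ Ω, (g z).re ≤ b

theorem isReMaxBoundary_of_eq_zero_on_frontier_diff [Nontrivial V] {E : Type*}
    [NormedAddCommGroup E] [NormedSpace ℂ E] {S Ω : Set V} {f : V → E}
    (hΩ : Bornology.IsBounded Ω) (hf : DiffContOnCl ℂ f Ω) (hf0 : ∀ z ∈ Ω, f z ≠ 0)
    (hfb : Bornology.IsBounded (f '' frontier Ω)) (hfS : ∀ w ∈ frontier Ω \ S, f w = 0) :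
    IsReMaxBoundary S Ω := by
  intro g b hg hgS z hz
  obtain ⟨M, hM0, hM⟩ := hfb.exists_pos_norm_le
  have norm_exp_smul (n : ℕ) (w : V) :
      ‖Complex.exp (n * g w) • f w‖ = ‖f w‖ * Real.exp (g w).re ^ n := by
    rw [norm_smul, Complex.norm_exp, ← Real.exp_nat_mul, mul_comm]
    simp
  have hbound (n : ℕ) : ‖f z‖ * Real.exp (g z).re ^ n ≤ M * Real.exp b ^ n := by
    rw [← norm_exp_smul]
    have hd : DiffContOnCl ℂ (fun w ↦ Complex.exp (n * g w) • f w) Ω :=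
      (Complex.differentiable_exp.comp_diffContOnCl (hg.const_smul (n : ℂ))).smul hf
    refine Complex.norm_le_of_forall_mem_frontier_norm_le hΩ hd (fun w hw ↦ ?_) (subset_closure hz)
    by_cases hwS : w ∈ S
    · rw [norm_exp_smul]
      gcongr
      exacts [hM _ (mem_image_of_mem f hw), hgS w hwS]
    · rw [hfS w ⟨hw, hwS⟩, smul_zero, norm_zero]
      positivity
  exact Real.exp_le_exp.1 <|
    le_of_forall_mul_pow_le_mul_pow (norm_pos_iff.2 (hf0 z hz)) (Real.exp_pos b) hbound

end MaximumPrinciple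

section PolynomialApproximation

theorem exists_polynomial_re_eval_toCircle_eq_re_smul_fourier {T : ℝ} (a : ℂ) (n : ℤ) :
    ∃ P : ℂ[X], ∀ x : AddCircle T,
      (P.eval (AddCircle.toCircle x : ℂ)).re = (a • fourier n x).re := by
  obtain ⟨n, rfl | rfl⟩ := n.eq_nat_or_neg
  · exact ⟨C a * X ^ n, fun x ↦ by simp [fourier_apply, AddCircle.toCircle_nsmul]⟩
  · refine ⟨C (conj a) * X ^ n, fun x ↦ ?_⟩
    rw [← Complex.conj_re (a • _), smul_eq_mul, map_mul, fourier_neg, Complex.conj_conj]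
    simp [fourier_apply, AddCircle.toCircle_nsmul]

theorem exists_polynomial_re_eval_toCircle_eq_of_mem_span_fourier {T : ℝ} {p : C(AddCircle T, ℂ)}
    (hp : p ∈ Submodule.span ℂ (range (@fourier T))) :
    ∃ P : ℂ[X], ∀ x, (P.eval (AddCircle.toCircle x : ℂ)).re = (p x).re := by
  induction hp using Submodule.closure_induction with
  | zero => exact ⟨0, by simp⟩
  | add q r _ _ hq hr =>
    obtain ⟨P, hP⟩ := hq
    obtain ⟨Q, hQ⟩ := hr
    exact ⟨P + Q, fun x ↦ by simp [hP, hQ]⟩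
  | smul_mem a q hq =>
    obtain ⟨n, rfl⟩ := hq
    exact exists_polynomial_re_eval_toCircle_eq_re_smul_fourier a n

theorem exists_polynomial_abs_re_eval_circle_sub_le (u : C(Circle, ℝ)) {δ : ℝ} (hδ : 0 < δ) :
    ∃ P : ℂ[X], ∀ ζ : Circle, |(P.eval (ζ : ℂ)).re - u ζ| ≤ δ := by
  have : Fact (0 < (1 : ℝ)) := ⟨one_pos⟩
  let φ : C(AddCircle (1 : ℝ), ℂ) :=
    ⟨fun x ↦ u (AddCircle.toCircle x), by
      have := AddCircle.continuous_toCircle (T := 1)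
      fun_prop⟩
  have hφ : φ ∈ (Submodule.span ℂ (range (@fourier 1))).topologicalClosure := by
    rw [span_fourier_closure_eq_top]
    exact Submodule.mem_top
  obtain ⟨p, hp, hpφ⟩ := Metric.mem_closure_iff.1 hφ δ hδ
  obtain ⟨P, hP⟩ := exists_polynomial_re_eval_toCircle_eq_of_mem_span_fourier hp
  refine ⟨P, fun ζ ↦ ?_⟩
  obtain ⟨x, rfl⟩ := (AddCircle.homeomorphCircle (one_ne_zero (α := ℝ))).surjective ζ
  rw [AddCircle.homeomorphCircle_apply]
  calc |(P.eval (AddCircle.toCircle x : ℂ)).re - u (AddCircle.toCircle x)|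
      = |(p x - φ x).re| := by rw [hP, Complex.sub_re]; rfl
    _ ≤ ‖p x - φ x‖ := Complex.abs_re_le_norm _
    _ ≤ dist p φ := by
      rw [← dist_eq_norm]
      exact ContinuousMap.dist_apply_le_dist x
    _ ≤ δ := by rw [dist_comm]; exact hpφ.le

theorem exists_polynomial_abs_re_eval_sub_le {u : ℂ → ℝ} {c : ℂ} {R δ : ℝ} (hR : 0 < R)
    (hu : ContinuousOn u (sphere c R)) (hδ : 0 < δ) :
    ∃ P : ℂ[X], ∀ w ∈ sphere c R, |(P.eval w).re - u w| ≤ δ := by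
  have hR' : (R : ℂ) ≠ 0 := Complex.ofReal_ne_zero.2 hR.ne'
  have hmem (ζ : Circle) : c + R * ζ ∈ sphere c R := by simp [abs_of_pos hR, Circle.norm_coe]
  obtain ⟨P, hP⟩ := exists_polynomial_abs_re_eval_circle_sub_le
    ⟨fun ζ ↦ u (c + R * ζ), hu.comp_continuous (by fun_prop) hmem⟩ hδ
  refine ⟨P.comp (C (R : ℂ)⁻¹ * (X - C c)), fun w hw ↦ ?_⟩
  let ζ : Circle := ⟨(R : ℂ)⁻¹ * (w - c), by
    simp [Submonoid.unitSphere, mem_sphere_iff_norm.1 hw, abs_of_pos hR, hR.ne']⟩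
  have hw' : c + R * (ζ : ℂ) = w := by simp [ζ, hR']
  simpa [ζ, hw'] using hP ζ

end PolynomialApproximation

namespace IsReMaxBoundary

variable {E : Type*} [NormedAddCommGroup E] [NormedSpace ℂ E] {Ω : Set ℂ} {c : ℂ} {R : ℝ}

theorem re_le_circleAverage_re {g : ℂ → ℂ} (hΩ : IsReMaxBoundary (sphere c R) Ω) (hR : 0 < R)
    (hc : c ∈ Ω) (hg : DiffContOnCl ℂ g Ω) (hgS : ContinuousOn g (sphere c R)) :
    (g c).re ≤ Real.circleAverage (fun w ↦ (g w).re) c R := by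
  have hre : ContinuousOn (fun w ↦ (g w).re) (sphere c R) :=
    Complex.continuous_re.comp_continuousOn hgS
  have hgint : CircleIntegrable (fun w ↦ (g w).re) c R := hre.circleIntegrable hR.le
  refine le_of_forall_pos_le_add fun ε hε ↦ ?_
  obtain ⟨P, hP⟩ := exists_polynomial_abs_re_eval_sub_le hR hre (half_pos hε)
  have hPint : CircleIntegrable (fun w ↦ (P.eval w).re) c R :=
    (Complex.continuous_re.comp P.continuous).continuousOn.circleIntegrable hR.le
  have hPmean : Real.circleAverage (fun w ↦ (P.eval w).re) c R = (P.eval c).re := by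
    rw [← P.differentiable.diffContOnCl.circleAverage (R := R)]
    exact Complex.reCLM.circleAverage_comp_comm (P.continuous.continuousOn.circleIntegrable hR.le)
  have hcenter : (g c - P.eval c).re ≤ ε / 2 :=
    hΩ (hg.sub P.differentiable.diffContOnCl) (fun w hw ↦ by
      rw [Pi.sub_apply, Complex.sub_re]
      linarith [neg_abs_le ((P.eval w).re - (g w).re), hP w hw]) c hc
  have hPg : (P.eval c).re ≤ Real.circleAverage (fun w ↦ (g w).re) c R + ε / 2 := by
    rw [← hPmean, ← sub_le_iff_le_add', ← Real.circleAverage_fun_sub hPint hgint]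
    refine Real.circleAverage_mono_on_of_le_circle (hPint.sub hgint) fun w hw ↦ ?_
    rw [abs_of_pos hR] at hw
    exact (le_abs_self _).trans (hP w hw)
  rw [Complex.sub_re] at hcenter
  linarith

theorem circleAverage_eq [CompleteSpace E] {g : ℂ → E} (hΩ : IsReMaxBoundary (sphere c R) Ω)
    (hR : 0 < R) (hc : c ∈ Ω) (hg : DiffContOnCl ℂ g Ω) (hgS : ContinuousOn g (sphere c R)) :
    Real.circleAverage g c R = g c := by
  obtain ⟨φ, -, hφ⟩ := exists_dual_vector'' ℂ (g c - Real.circleAverage g c R)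
  have hle : (φ (g c)).re ≤ Real.circleAverage (fun w ↦ (φ (g w)).re) c R :=
    hΩ.re_le_circleAverage_re hR hc (φ.differentiable.comp_diffContOnCl hg)
      (φ.continuous.comp_continuousOn hgS)
  have hcomm : Real.circleAverage (fun w ↦ (φ (g w)).re) c R = (φ (Real.circleAverage g c R)).re :=
    (Complex.reCLM.comp (φ.restrictScalars ℝ)).circleAverage_comp_comm
      (hgS.circleIntegrable hR.le)
  have hnorm : ‖g c - Real.circleAverage g c R‖ ≤ 0 := by
    have hre := congrArg Complex.re hφ
    rw [map_sub, Complex.sub_re, ← hcomm] at hre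
    exact (hre.symm.trans_le (sub_nonpos.2 hle) :)
  exact (sub_eq_zero.1 (norm_le_zero_iff.1 hnorm)).symm

theorem circleIntegral_eq_zero [CompleteSpace E] {g : ℂ → E} (hΩ : IsReMaxBoundary (sphere c R) Ω)
    (hR : 0 < R) (hc : c ∈ Ω) (hg : DiffContOnCl ℂ g Ω) (hgS : ContinuousOn g (sphere c R)) :
    (∮ z in C(c, R), g z) = 0 := by
  have hmean : Real.circleAverage (fun z ↦ (z - c) • g z) c R = (c - c) • g c :=
    hΩ.circleAverage_eq hR hc ((differentiable_id.sub_const c).diffContOnCl.smul hg) (by fun_prop)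
  rw [sub_self, zero_smul, Real.circleAverage_eq_circleIntegral hR.ne',
    smul_eq_zero_iff_right (inv_ne_zero Complex.two_pi_I_ne_zero)] at hmean
  rw [← hmean]
  refine circleIntegral.integral_congr hR.le fun z hz ↦ ?_
  rw [inv_smul_smul₀ (sub_ne_zero.2 (ne_of_mem_sphere hz hR.ne'))]

theorem ball_subset_closure (hΩ : IsReMaxBoundary (sphere c R) Ω) (hc : c ∈ Ω) :
    ball c R ⊆ closure Ω := by
  intro a ha
  by_contra haΩ
  have hR : 0 < R := dist_nonneg.trans_lt ha
  have hinv : DiffContOnCl ℂ (fun z ↦ (z - a)⁻¹) Ω :=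
    (differentiable_id.sub_const a).diffContOnCl.inv fun z hz h ↦ haΩ (sub_eq_zero.1 h ▸ hz)
  have hinvS : ContinuousOn (fun z ↦ (z - a)⁻¹) (sphere c R) :=
    ContinuousOn.inv₀ (by fun_prop) fun z hz h ↦
      (sub_eq_zero.1 h ▸ ha : z ∈ ball c R).ne hz
  have h := hΩ.circleIntegral_eq_zero hR hc hinv hinvS
  rw [circleIntegral.integral_sub_inv_of_mem_ball ha] at h
  exact Complex.two_pi_I_ne_zero h

theorem two_pi_I_inv_smul_circleIntegral_sub_inv_smul [CompleteSpace E] {g : ℂ → E} {z : ℂ}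
    (hΩ : IsReMaxBoundary (sphere c R) Ω) (hΩo : IsOpen Ω) (hc : c ∈ Ω) (hg : DiffContOnCl ℂ g Ω)
    (hgS : ContinuousOn g (sphere c R)) (hz : z ∈ Ω) (hzR : z ∈ ball c R) :
    ((2 * π * Complex.I : ℂ)⁻¹ • ∮ w in C(c, R), (w - z)⁻¹ • g w) = g z := by
  have hR : 0 < R := dist_nonneg.trans_lt hzR
  have hne : ∀ w ∈ sphere c R, w ≠ z := fun w hw h ↦ (h ▸ hzR : w ∈ ball c R).ne hw
  have hinv : ContinuousOn (fun w ↦ (w - z)⁻¹) (sphere c R) :=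
    ContinuousOn.inv₀ (by fun_prop) fun w hw ↦ sub_ne_zero.2 (hne w hw)
  have hslope : DiffContOnCl ℂ (dslope g z) Ω :=
    ⟨(Complex.differentiableOn_dslope (hΩo.mem_nhds hz)).2 hg.differentiableOn,
      (continuousOn_dslope (mem_of_superset (hΩo.mem_nhds hz) subset_closure)).2
        ⟨hg.continuousOn, hg.differentiableAt hΩo hz⟩⟩
  have hslopeS : ContinuousOn (dslope g z) (sphere c R) := fun w hw ↦
    (continuousWithinAt_dslope_of_ne (hne w hw)).2 (hgS w hw)
  have hsplit : EqOn (dslope g z) (fun w ↦ (w - z)⁻¹ • g w - (w - z)⁻¹ • g z) (sphere c R) := by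
    intro w hw
    simp only [dslope_of_ne g (hne w hw), slope_def_module, smul_sub]
  have hzero := hΩ.circleIntegral_eq_zero hR hc hslope hslopeS
  rw [circleIntegral.integral_congr hR.le hsplit, circleIntegral.integral_sub
    ((hinv.fun_smul hgS).circleIntegrable hR.le)
    ((hinv.fun_smul continuousOn_const).circleIntegrable hR.le),
    circleIntegral.integral_smul_const, circleIntegral.integral_sub_inv_of_mem_ball hzR,
    sub_eq_zero] at hzero
  rw [hzero, inv_smul_smul₀ Complex.two_pi_I_ne_zero]

theorem analyticOnNhd_ball [CompleteSpace E] {g : ℂ → E}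
    (hΩ : IsReMaxBoundary (sphere c R) Ω) (hΩo : IsOpen Ω) (hΩR : Ω ⊆ ball c R) (hc : c ∈ Ω)
    (hg : DifferentiableOn ℂ g Ω) (hgc : ContinuousOn g (closedBall c R)) :
    AnalyticOnNhd ℂ g (ball c R) := by
  have hR : 0 < R := dist_nonneg.trans_lt (hΩR hc)
  lift R to ℝ≥0 using hR.le
  have hgS : ContinuousOn g (sphere c R) := hgc.mono sphere_subset_closedBall
  have hgΩ : DiffContOnCl ℂ g Ω :=
    ⟨hg, hgc.mono (closure_minimal (hΩR.trans ball_subset_closedBall) isClosed_closedBall)⟩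
  have hcauchy : AnalyticOnNhd ℂ
      (fun z ↦ (2 * π * Complex.I : ℂ)⁻¹ • ∮ w in C(c, R), (w - z)⁻¹ • g w) (ball c R) := by
    rw [← eball_coe]
    exact (hasFPowerSeriesOn_cauchy_integral (hgS.circleIntegrable R.2) hR).analyticOnNhd
  have heqΩ : EqOn (fun z ↦ (2 * π * Complex.I : ℂ)⁻¹ • ∮ w in C(c, R), (w - z)⁻¹ • g w) g Ω :=
    fun z hz ↦ hΩ.two_pi_I_inv_smul_circleIntegral_sub_inv_smul hΩo hc hgΩ hgS hz (hΩR hz)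
  exact hcauchy.congr isOpen_ball <| heqΩ.of_subset_closure hcauchy.continuousOn
    (hgc.mono ball_subset_closedBall) hΩR (hΩ.ball_subset_closure hc)

end IsReMaxBoundary

variable {E : Type*} [NormedAddCommGroup E] [NormedSpace ℂ E]

theorem isReMaxBoundary_sphere_ball_inter_ne_zero {f : ℂ → E} {c : ℂ} {R : ℝ}
    (hf : ContinuousOn f (closedBall c R))
    (hdiff : ∀ z ∈ ball c R, f z ≠ 0 → DifferentiableAt ℂ f z) :
    IsReMaxBoundary (sphere c R) (ball c R ∩ f ⁻¹' {0}ᶜ) := by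
  have hopen : IsOpen (ball c R ∩ f ⁻¹' {0}ᶜ) :=
    (hf.mono ball_subset_closedBall).isOpen_inter_preimage isOpen_ball isOpen_compl_singleton
  have hcl : closure (ball c R ∩ f ⁻¹' {0}ᶜ) ⊆ closedBall c R :=
    closure_minimal (inter_subset_left.trans ball_subset_closedBall) isClosed_closedBall
  have hbdd : Bornology.IsBounded (f '' closedBall c R) :=
    ((isCompact_closedBall c R).image_of_continuousOn hf).isBounded
  refine isReMaxBoundary_of_eq_zero_on_frontier_diff (isBounded_ball.subset inter_subset_left)
    ⟨fun z hz ↦ (hdiff z hz.1 hz.2).differentiableWithinAt, hf.mono hcl⟩ (fun z hz ↦ hz.2)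
    (hbdd.subset (image_mono (frontier_subset_closure.trans hcl))) fun w hw ↦ ?_
  rw [hopen.frontier_eq] at hw
  have hwball : w ∈ ball c R := lt_of_le_of_ne (hcl hw.1.1) hw.2
  by_contra hfw
  exact hw.1.2 ⟨hwball, hfw⟩

theorem analyticOnNhd_ball_of_differentiableAt_of_ne_zero [CompleteSpace E] {f : ℂ → E} {c : ℂ}
    {R : ℝ} (hc : f c ≠ 0) (hf : ContinuousOn f (closedBall c R))
    (hdiff : ∀ z ∈ ball c R, f z ≠ 0 → DifferentiableAt ℂ f z) :
    AnalyticOnNhd ℂ f (ball c R) := fun z hz ↦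
  (isReMaxBoundary_sphere_ball_inter_ne_zero hf hdiff).analyticOnNhd_ball
    ((hf.mono ball_subset_closedBall).isOpen_inter_preimage isOpen_ball isOpen_compl_singleton)
    inter_subset_left
    ⟨mem_ball_self (dist_nonneg.trans_lt hz), hc⟩
    (fun w hw ↦ (hdiff w hw.1 hw.2).differentiableWithinAt) hf z hz

theorem rado_removable_singularity_general [CompleteSpace E] {U : Set ℂ} (hU : IsOpen U)
    {f : ℂ → E} (hf : ContinuousOn f U)
    (hdiff : ∀ z ∈ U, f z ≠ 0 → DifferentiableAt ℂ f z) :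
    AnalyticOnNhd ℂ f U := by
  intro a ha
  obtain ⟨ε, hε, hεU⟩ := Metric.isOpen_iff.1 hU a ha
  by_cases hzero : f =ᶠ[𝓝 a] 0
  · exact analyticAt_const.congr hzero.symm
  · obtain ⟨c, hc, hfc⟩ : ∃ c ∈ ball a (ε / 2), f c ≠ 0 := by
      by_contra! h
      exact hzero (eventually_of_mem (ball_mem_nhds a (half_pos hε)) h)
    have hsub : closedBall c (ε / 2) ⊆ U := fun z hz ↦ hεU <| by
      rw [mem_ball] at *
      rw [mem_closedBall] at hz
      linarith [dist_triangle z c a]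
    exact analyticOnNhd_ball_of_differentiableAt_of_ne_zero hfc (hf.mono hsub)
      (fun z hz ↦ hdiff z (hsub (ball_subset_closedBall hz))) a (mem_ball_comm.1 hc)

/-- The Radó-type removable-singularity statement used in the proof of Theorem 1.2: a
continuous function on an open set `U ⊆ ℂ` that is complex differentiable away from its
zero set is analytic on all of `U`. -/
theorem rado_removable_singularity (U : Set ℂ) (hU : IsOpen U) (f : ℂ → ℂ)
    (hf : ContinuousOn f U)
    (hdiff : ∀ z ∈ U, f z ≠ 0 → DifferentiableAt ℂ f z) :
    AnalyticOnNhd ℂ f U :=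
  rado_removable_singularity_general hU hf hdiff
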